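/- arXiv:1506.06844 — 2 statements merged into one kernel-verified Lean document; each statement's English description precedes it below -/
import Mathlib

section
/- Let A′ and B′ be tuples of complex numbers, α̂ and β̂ complex numbers, and p a prime. Then for every integer r ≥ 1, τ_{B′}(p^r) τ_{A′∪{−β̂}}(p^r) + τ_{A′}(p^r) τ_{B′∪{−α̂}}(p^r) − τ_{A′}(p^r) τ_{B′}(p^r) = τ_{A′∪{−β̂}}(p^r) τ_{B′∪{−α̂}}(p^r) − p^{α̂+β̂} τ_{A′∪{−β̂}}(p^{r−1}) τ_{B′∪{−α̂}}(p^{r−1}). -/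
open Complex

/-- Shifted divisor function: `tauSh A n = ∑_{n₁⋯n_k = n} n₁^{-α₁}⋯n_k^{-α_k}`,
defined by iterated Dirichlet convolution. -/
noncomputable def tauSh : List ℂ → ℕ → ℂ
  | [], n => if n = 1 then 1 else 0
  | a :: A, n => ∑ d ∈ n.divisors, (d : ℂ) ^ (-a) * tauSh A (n / d)

/-- `g_A(s,q) = ∏_{p ∣ q} ( ∏_{α∈A} (1 − p^{−s−α}) · ∑_{j≥0} τ_A(p^{j+q_p}) p^{−js} )`. -/
noncomputable def gSh (A : List ℂ) (s : ℂ) (q : ℕ) : ℂ :=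
  ∏ p ∈ q.primeFactors,
    ((A.map (fun α => 1 - (p : ℂ) ^ (-s - α))).prod *
      ∑' j : ℕ, tauSh A (p ^ (j + q.factorization p)) * (p : ℂ) ^ (-(j : ℂ) * s))

/-- `G_A(s,q) = ∑_{d∣q} (μ(d)/φ(d)) d^s ∑_{e∣d} (μ(e)/e^s) g_A(s, qe/d)`. -/
noncomputable def GSh (A : List ℂ) (s : ℂ) (q : ℕ) : ℂ :=
  ∑ d ∈ q.divisors, ((ArithmeticFunction.moebius d : ℂ) / (Nat.totient d : ℂ)) * (d : ℂ) ^ s *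
    ∑ e ∈ d.divisors, (ArithmeticFunction.moebius e : ℂ) / (e : ℂ) ^ s * gSh A s (q * e / d)

/-!
Dirichlet convolution is commutative, so `τ_{A ∪ {γ}}` does not depend on where `γ` stands in the
list. With `γ` in front, splitting off the divisor `d = 1` of `p ^ (r + 1)` gives
`τ_{A ∪ {γ}}(p^(r+1)) - p^(-γ) τ_{A ∪ {γ}}(p^r) = τ_A(p^(r+1))`.
With `X = τ_{A' ∪ {-β̂}}(p^r)`, `Y = τ_{B' ∪ {-α̂}}(p^r)`, `a = τ_{A'}(p^r)` and `b = τ_{B'}(p^r)`,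
the left-hand side of the theorem is `X Y - (X - a) (Y - b)`, and the recurrence evaluates `X - a`
and `Y - b`.
-/

/-- The arithmetic function `n ↦ n ^ (-a)`, whose Dirichlet series is `ζ(s + a)`; the shifted
divisor functions are the convolution products of these. Its value at `0` is set to `0`. -/
noncomputable def shiftedZeta (a : ℂ) : ArithmeticFunction ℂ :=
  toArithmeticFunction fun n => (n : ℂ) ^ (-a)

theorem shiftedZeta_apply (a : ℂ) {n : ℕ} (hn : n ≠ 0) : shiftedZeta a n = (n : ℂ) ^ (-a) :=
  if_neg hn

theorem tauSh_eq_prod_shiftedZeta (A : List ℂ) (n : ℕ) :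
    tauSh A n = (A.map shiftedZeta).prod n := by
  induction A generalizing n with
  | nil => rw [tauSh, List.map_nil, List.prod_nil, ArithmeticFunction.one_apply]
  | cons a A ih =>
    rw [tauSh, List.map_cons, List.prod_cons, ArithmeticFunction.mul_apply,
      Nat.sum_divisorsAntidiagonal fun d e => shiftedZeta a d * (A.map shiftedZeta).prod e]
    refine Finset.sum_congr rfl fun d hd => ?_
    rw [shiftedZeta_apply a (Nat.pos_of_mem_divisors hd).ne', ih]

theorem tauSh_congr_perm {A B : List ℂ} (h : A.Perm B) : tauSh A = tauSh B := by
  funext n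
  rw [tauSh_eq_prod_shiftedZeta, tauSh_eq_prod_shiftedZeta, (h.map shiftedZeta).prod_eq]

theorem tauSh_cons_prime_pow {p : ℕ} (hp : p.Prime) (a : ℂ) (A : List ℂ) (r : ℕ) :
    tauSh (a :: A) (p ^ r) =
      ∑ i ∈ Finset.range (r + 1), ((p : ℂ) ^ (-a)) ^ i * tauSh A (p ^ (r - i)) := by
  rw [tauSh, Nat.sum_divisors_prime_pow hp]
  refine Finset.sum_congr rfl fun i hi => ?_
  rw [Nat.pow_div (Finset.mem_range_succ_iff.mp hi) hp.pos, Nat.cast_pow,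
    ← natCast_cpow_natCast_mul, cpow_nat_mul]

theorem tauSh_cons_prime_pow_succ {p : ℕ} (hp : p.Prime) (a : ℂ) (A : List ℂ) (r : ℕ) :
    tauSh (a :: A) (p ^ (r + 1)) =
      tauSh A (p ^ (r + 1)) + (p : ℂ) ^ (-a) * tauSh (a :: A) (p ^ r) := by
  rw [tauSh_cons_prime_pow hp, Finset.sum_range_succ', tauSh_cons_prime_pow hp, Finset.mul_sum,
    add_comm, pow_zero, one_mul, Nat.sub_zero]
  simp only [pow_succ' ((p : ℂ) ^ (-a)), mul_assoc, Nat.add_sub_add_right]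

theorem tauSh_append_singleton_prime_pow_succ {p : ℕ} (hp : p.Prime) (A : List ℂ) (c : ℂ) (r : ℕ) :
    tauSh (A ++ [c]) (p ^ (r + 1)) =
      tauSh A (p ^ (r + 1)) + (p : ℂ) ^ (-c) * tauSh (A ++ [c]) (p ^ r) := by
  rw [tauSh_congr_perm (List.perm_append_singleton c A), tauSh_cons_prime_pow_succ hp]

/-- For tuples A′, B′, numbers α̂, β̂, a prime p and r ≥ 1,
τ_{B′}(p^r) τ_{A′∪{−β̂}}(p^r) + τ_{A′}(p^r) τ_{B′∪{−α̂}}(p^r) − τ_{A′}(p^r) τ_{B′}(p^r)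
  = τ_{A′∪{−β̂}}(p^r) τ_{B′∪{−α̂}}(p^r) − p^{α̂+β̂} τ_{A′∪{−β̂}}(p^{r−1}) τ_{B′∪{−α̂}}(p^{r−1}). -/
theorem stmt12 (A' B' : List ℂ) (αh βh : ℂ) (p : ℕ) (hp : p.Prime) (r : ℕ) (hr : 1 ≤ r) :
    tauSh B' (p ^ r) * tauSh (A' ++ [-βh]) (p ^ r)
        + tauSh A' (p ^ r) * tauSh (B' ++ [-αh]) (p ^ r)
        - tauSh A' (p ^ r) * tauSh B' (p ^ r)
      = tauSh (A' ++ [-βh]) (p ^ r) * tauSh (B' ++ [-αh]) (p ^ r)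
        - (p : ℂ) ^ (αh + βh) *
            (tauSh (A' ++ [-βh]) (p ^ (r - 1)) * tauSh (B' ++ [-αh]) (p ^ (r - 1))) := by
  obtain ⟨k, rfl⟩ := Nat.exists_eq_add_of_le' hr
  have hA := tauSh_append_singleton_prime_pow_succ hp A' (-βh) k
  have hB := tauSh_append_singleton_prime_pow_succ hp B' (-αh) k
  have hpow : (p : ℂ) ^ (αh + βh) = (p : ℂ) ^ αh * (p : ℂ) ^ βh :=
    cpow_add _ _ (Nat.cast_ne_zero.mpr hp.ne_zero)
  rw [neg_neg] at hA hB
  rw [Nat.add_sub_cancel, hpow, hA, hB]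
  ring
end

section
/- Let A and B be tuples of complex numbers all of whose entries have real part of absolute value less than 1/4, with distinguished entries α̂ of A and β̂ of B, and write A′ = A minus α̂, B′ = B minus β̂. Then for every prime p, ∏_{α∈A′}(1 − p^{−1+α̂−α}) · ∏_{β∈B′}(1 − p^{−1+β̂−β}) · (1 − p^{−1+α̂+β̂}) · Σ_{j≥0} τ_{A′∪{−β̂}}(p^j) τ_{B′∪{−α̂}}(p^j) p^{−j} = Σ_{d≥0} Σ_{q=0}^{1} (−1)^q G_A(1−α̂, p^{d+q}) G_B(1−β̂, p^{d+q}) p^{−d − q(2−α̂−β̂)}, all series converging absolutely. -/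
open Complex

/-!
At powers of `p`, `τ_A` is a complete homogeneous symmetric polynomial in the numbers `p^{-α}`.
At `s = 1 - α̂` the divisor sum defining `G_A` cancels the contribution of `α̂`, so that
`G_A(1 - α̂, p^m) = ∏_{α ∈ A′} (1 - p^{-α} u) · S_m` with `S_m = ∑_j τ_{A′}(p^{j+m}) u^j` and
`u = p^{-1+α̂}`; likewise `G_B` yields tails `T_m` of `b_n = τ_{B′}(p^n)`.

Put `w = p⁻¹`, `x = p^{β̂}`, `y = p^{α̂}`, so `u = yw`, and let `a_n = τ_{A′}(p^n)`,
`X_n = τ_{A′ ∪ {-β̂}}(p^n)`, `Y_n = τ_{B′ ∪ {-α̂}}(p^n)`. Since `X_{n+1} = a_{n+1} + x X_n` and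
`S_n = a_n + y w S_{n+1}` (and symmetrically), the `n`-th terms of the two sides differ by an
increment of `w^n ((X_n - a_n + S_n)(Y_n - b_n + T_n) - S_n T_n)`. This vanishes at `n = 0` because
`X_0 = a_0` and `Y_0 = b_0`, and it tends to `0`, so the two sums agree.
-/

open Filter Asymptotics Finset.HasAntidiagonal

section CompleteHomogeneous

variable {R : Type*} [CommSemiring R]

/-- The complete homogeneous symmetric polynomial of degree `n` evaluated at the entries of `l`,
encoded as the `n`-th coefficient of the generating series `∏ (1 - x X)⁻¹ = ∏ ∑ xᵏ Xᵏ`. -/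
noncomputable def hsymmEval (l : List R) (n : ℕ) : R :=
  PowerSeries.coeff n (l.map fun x => PowerSeries.mk (x ^ ·)).prod

lemma hsymmEval_perm {l₁ l₂ : List R} (h : l₁.Perm l₂) : hsymmEval l₁ = hsymmEval l₂ := by
  funext n
  rw [hsymmEval, (h.map _).prod_eq, hsymmEval]

lemma hsymmEval_nil (n : ℕ) : hsymmEval ([] : List R) n = if n = 0 then 1 else 0 :=
  PowerSeries.coeff_one n

lemma hsymmEval_cons (x : R) (l : List R) (n : ℕ) :
    hsymmEval (x :: l) n = ∑ ij ∈ antidiagonal n, x ^ ij.1 * hsymmEval l ij.2 := by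
  simp only [hsymmEval, List.map_cons, List.prod_cons, PowerSeries.coeff_mul,
    PowerSeries.coeff_mk]

lemma hsymmEval_zero (l : List R) : hsymmEval l 0 = 1 := by
  induction l with
  | nil => simp [hsymmEval_nil]
  | cons x l ih => simp [hsymmEval_cons, ih]

lemma hsymmEval_cons_succ (x : R) (l : List R) (n : ℕ) :
    hsymmEval (x :: l) (n + 1) = hsymmEval l (n + 1) + x * hsymmEval (x :: l) n := by
  rw [hsymmEval_cons, hsymmEval_cons, Finset.Nat.sum_antidiagonal_succ, Finset.mul_sum]
  simp only [pow_zero, one_mul, pow_succ', mul_assoc]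

lemma hsymmEval_cons_mul_pow (x : R) (l : List R) (u : R) (n : ℕ) :
    hsymmEval (x :: l) n * u ^ n =
      ∑ ij ∈ antidiagonal n, (x * u) ^ ij.1 * (hsymmEval l ij.2 * u ^ ij.2) := by
  rw [hsymmEval_cons, Finset.sum_mul]
  refine Finset.sum_congr rfl fun ij hij => ?_
  rw [← mem_antidiagonal.1 hij, pow_add, mul_pow]
  ring

end CompleteHomogeneous

section EulerFactor

variable {𝕜 : Type*} [NormedField 𝕜] {l : List 𝕜} {u : 𝕜}

lemma summable_norm_hsymmEval_mul_pow (h : ∀ x ∈ l, ‖x * u‖ < 1) :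
    Summable fun n => ‖hsymmEval l n * u ^ n‖ := by
  induction l with
  | nil =>
    refine summable_of_ne_finset_zero (s := {0}) fun n hn => ?_
    simp [hsymmEval_nil, Finset.notMem_singleton.1 hn]
  | cons x l ih =>
    have hx := summable_norm_geometric_of_norm_lt_one (h x List.mem_cons_self)
    have hl := ih fun y hy => h y (List.mem_cons_of_mem x hy)
    simpa only [hsymmEval_cons_mul_pow] using
      summable_norm_sum_mul_antidiagonal_of_summable_norm hx hl

variable [CompleteSpace 𝕜]

lemma prod_one_sub_mul_tsum_hsymmEval (h : ∀ x ∈ l, ‖x * u‖ < 1) :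
    (l.map fun x => 1 - x * u).prod * ∑' n, hsymmEval l n * u ^ n = 1 := by
  induction l with
  | nil =>
    rw [tsum_eq_single 0 fun n hn => by simp [hsymmEval_nil, hn]]
    simp [hsymmEval_nil]
  | cons x l ih =>
    have hx : ‖x * u‖ < 1 := h x List.mem_cons_self
    have hl : ∀ y ∈ l, ‖y * u‖ < 1 := fun y hy => h y (List.mem_cons_of_mem x hy)
    simp only [hsymmEval_cons_mul_pow]
    rw [← tsum_mul_tsum_eq_tsum_sum_antidiagonal_of_summable_norm
        (summable_norm_geometric_of_norm_lt_one hx) (summable_norm_hsymmEval_mul_pow hl),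
      List.map_cons, List.prod_cons, mul_mul_mul_comm, ih hl, mul_one,
      mul_comm, geom_series_mul_neg _ hx]

end EulerFactor

lemma hsymmEval_isBigO_pow {𝕜 : Type*} [RCLike 𝕜] {l : List 𝕜} {r : ℝ} (hr : 0 < r)
    (h : ∀ x ∈ l, ‖x‖ < r) : hsymmEval l =O[atTop] (r ^ ·) := by
  have hnorm : ‖((r⁻¹ : ℝ) : 𝕜)‖ = r⁻¹ := by
    rw [RCLike.norm_ofReal, abs_of_pos (inv_pos.2 hr)]
  have hsum : Summable fun n => ‖hsymmEval l n * ((r⁻¹ : ℝ) : 𝕜) ^ n‖ :=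
    summable_norm_hsymmEval_mul_pow fun x hx => by
      rw [norm_mul, hnorm, ← div_eq_mul_inv, div_lt_one hr]
      exact h x hx
  refine isBigO_of_le' (c := ∑' n, ‖hsymmEval l n * ((r⁻¹ : ℝ) : 𝕜) ^ n‖) _ fun n => ?_
  have hle := hsum.le_tsum n fun _ _ => norm_nonneg _
  rw [norm_mul, norm_pow, hnorm, inv_pow, ← div_eq_mul_inv, div_le_iff₀ (pow_pos hr n)] at hle
  rwa [Real.norm_of_nonneg (pow_pos hr n).le]

section TailSum

variable {𝕜 : Type*} [NormedField 𝕜]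

/-- The generating series at `u` of the sequence `f` shifted by `m`. -/
noncomputable def tailSum (f : ℕ → 𝕜) (u : 𝕜) (m : ℕ) : 𝕜 :=
  ∑' j, f (j + m) * u ^ j

variable {f : ℕ → 𝕜} {u : 𝕜}

lemma summable_shift_mul_pow (hf : Summable fun n => f n * u ^ n) (m : ℕ) :
    Summable fun j => f (j + m) * u ^ j := by
  rcases eq_or_ne u 0 with rfl | hu
  · refine summable_of_ne_finset_zero (s := {0}) fun j hj => ?_
    rw [zero_pow (Finset.notMem_singleton.1 hj), mul_zero]
  · refine (((summable_nat_add_iff m).2 hf).mul_right (u ^ m)⁻¹).congr fun j => ?_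
    rw [pow_add, mul_assoc, mul_inv_cancel_right₀ (pow_ne_zero m hu)]

lemma tailSum_eq_add_mul_tailSum_succ (hf : Summable fun n => f n * u ^ n) (m : ℕ) :
    tailSum f u m = f m + u * tailSum f u (m + 1) := by
  rw [tailSum, (summable_shift_mul_pow hf m).tsum_eq_zero_add, tailSum, ← tsum_mul_left]
  simp only [zero_add, pow_zero, mul_one, pow_succ', add_right_comm _ 1 m, ← add_assoc,
    mul_left_comm]

lemma tailSum_isBigO_pow {r : ℝ} (hr : 0 < r) (hf : f =O[atTop] (r ^ ·)) (hu : r * ‖u‖ < 1) :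
    tailSum f u =O[atTop] (r ^ ·) := by
  obtain ⟨C, -, hC⟩ := bound_of_isBigO_nat_atTop hf
  have hgeom := hasSum_geometric_of_lt_one (by positivity : 0 ≤ r * ‖u‖) hu
  refine isBigO_of_le' (c := C * (1 - r * ‖u‖)⁻¹) _ fun m => ?_
  rw [mul_right_comm]
  refine tsum_of_norm_bounded (hgeom.mul_left (C * ‖r ^ m‖)) fun j => ?_
  calc ‖f (j + m) * u ^ j‖ ≤ C * ‖r ^ (j + m)‖ * ‖u‖ ^ j := by
        rw [norm_mul, norm_pow]
        gcongr
        exact hC (pow_pos hr _).ne'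
    _ = C * ‖r ^ m‖ * (r * ‖u‖) ^ j := by
        rw [pow_add, norm_mul, Real.norm_of_nonneg (pow_pos hr j).le, mul_pow]
        ring

lemma tailSum_hsymmEval_succ {x : 𝕜} {l : List 𝕜}
    (h : Summable fun n => hsymmEval (x :: l) n * u ^ n) (m : ℕ) :
    tailSum (hsymmEval l) u (m + 1) =
      tailSum (hsymmEval (x :: l)) u (m + 1) - x * tailSum (hsymmEval (x :: l)) u m := by
  rw [tailSum, tailSum, tailSum, ← tsum_mul_left, ← (summable_shift_mul_pow h (m + 1)).tsum_sub
    ((summable_shift_mul_pow h m).mul_left x)]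
  refine tsum_congr fun j => ?_
  rw [← add_assoc, hsymmEval_cons_succ]
  ring

end TailSum

lemma summable_norm_mul_mul_pow {𝕜 : Type*} [NormedField 𝕜] {f g : ℕ → 𝕜} {w : 𝕜} {r s : ℝ}
    (hf : f =O[atTop] (r ^ ·)) (hg : g =O[atTop] (s ^ ·)) (hr : 0 < r) (hs : 0 < s)
    (hw : r * s * ‖w‖ < 1) :
    Summable fun n => ‖f n * g n * w ^ n‖ := by
  have hpow : (fun n : ℕ => w ^ n) =O[atTop] (‖w‖ ^ ·) := isBigO_of_le _ fun n => by simp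
  refine summable_of_isBigO_nat (summable_geometric_of_lt_one (by positivity) hw) ?_
  simpa only [mul_pow] using ((hf.mul hg).mul hpow).norm_left

lemma tsum_eq_tsum_of_sub_eq_succ_sub {G : Type*} [AddCommGroup G] [TopologicalSpace G]
    [IsTopologicalAddGroup G] [T2Space G] {f g F : ℕ → G} (hf : Summable f) (hg : Summable g)
    (hstep : ∀ n, f n - g n = F (n + 1) - F n) (hzero : F 0 = 0)
    (hlim : Tendsto F atTop (nhds 0)) : ∑' n, f n = ∑' n, g n := by
  have hpartial : ∀ n, ∑ i ∈ Finset.range n, (f i - g i) = F n := fun n => by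
    simp only [hstep, Finset.sum_range_sub, hzero, sub_zero]
  rw [← sub_eq_zero, ← hf.tsum_sub hg]
  refine tendsto_nhds_unique (hf.sub hg).hasSum.tendsto_sum_nat ?_
  simpa only [hpartial] using hlim

section DiagonalIdentity

variable {𝕜 : Type*} [RCLike 𝕜]

/-- The condition on `l₁`, `l₂` and `w` under which the series `∑ hₙ(l₁) hₙ(l₂) wⁿ` of products of
complete homogeneous symmetric polynomials converges absolutely. -/
def DiagonallyConvergent (l₁ l₂ : List 𝕜) (w : 𝕜) : Prop :=
  ∀ a ∈ l₁, ∀ b ∈ l₂, ‖a * b * w‖ < 1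

lemma DiagonallyConvergent.symm {l₁ l₂ : List 𝕜} {w : 𝕜} (h : DiagonallyConvergent l₁ l₂ w) :
    DiagonallyConvergent l₂ l₁ w := fun b hb a ha => by
  simpa only [mul_comm b a] using h a ha b hb

lemma DiagonallyConvergent.exists_norm_lt {l₁ l₂ : List 𝕜} {w : 𝕜} (h₁ : l₁ ≠ []) (h₂ : l₂ ≠ [])
    (h : DiagonallyConvergent l₁ l₂ w) :
    ∃ r s : ℝ, 0 < r ∧ 0 < s ∧ (∀ a ∈ l₁, ‖a‖ < r) ∧ (∀ b ∈ l₂, ‖b‖ < s) ∧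
      r * s * ‖w‖ < 1 := by
  classical
  obtain ⟨a₀, ha₀, hmax₁⟩ := l₁.toFinset.exists_max_image norm (by simpa using h₁)
  obtain ⟨b₀, hb₀, hmax₂⟩ := l₂.toFinset.exists_max_image norm (by simpa using h₂)
  simp only [List.mem_toFinset] at ha₀ hmax₁ hb₀ hmax₂
  have hlim : Tendsto (fun ε : ℝ => (‖a₀‖ + ε) * (‖b₀‖ + ε) * ‖w‖) (nhdsWithin 0 (Set.Ioi 0))
      (nhds ‖a₀ * b₀ * w‖) :=
    Tendsto.mono_left (Continuous.tendsto' (by fun_prop) _ _ (by simp)) nhdsWithin_le_nhds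
  obtain ⟨ε, hlt, hε : 0 < ε⟩ :=
    ((hlim.eventually_lt_const (h a₀ ha₀ b₀ hb₀)).and self_mem_nhdsWithin).exists
  exact ⟨‖a₀‖ + ε, ‖b₀‖ + ε, by positivity, by positivity,
    fun a ha => (hmax₁ a ha).trans_lt (lt_add_of_pos_right _ hε),
    fun b hb => (hmax₂ b hb).trans_lt (lt_add_of_pos_right _ hε), hlt⟩

/-- The partial sums over `d < n` of the two sides of `one_sub_mul_tsum_hsymmEval_mul_hsymmEval`
differ by `diagonalDefect A B x y w n`. -/
noncomputable def diagonalDefect (A B : List 𝕜) (x y w : 𝕜) (n : ℕ) : 𝕜 :=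
  (hsymmEval (x :: A) n - hsymmEval A n + tailSum (hsymmEval A) (y * w) n) *
      (hsymmEval (y :: B) n - hsymmEval B n + tailSum (hsymmEval B) (x * w) n) * w ^ n -
    tailSum (hsymmEval A) (y * w) n * tailSum (hsymmEval B) (x * w) n * w ^ n

lemma diagonalDefect_zero (A B : List 𝕜) (x y w : 𝕜) : diagonalDefect A B x y w 0 = 0 := by
  simp [diagonalDefect, hsymmEval_zero]

variable {A B : List 𝕜} {x y w : 𝕜}

lemma DiagonallyConvergent.summable_hsymmEval_mul_pow
    (h : DiagonallyConvergent (x :: A) (y :: B) w) :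
    Summable fun n => hsymmEval A n * (y * w) ^ n :=
  .of_norm <| summable_norm_hsymmEval_mul_pow fun a ha => by
    simpa only [mul_assoc] using h a (List.mem_cons_of_mem x ha) y List.mem_cons_self

lemma diagonalDefect_succ_sub (h : DiagonallyConvergent (x :: A) (y :: B) w) (n : ℕ) :
    ∑ q ∈ Finset.range 2, (-(x * y * w ^ 2)) ^ q * (tailSum (hsymmEval A) (y * w) (n + q) *
          tailSum (hsymmEval B) (x * w) (n + q) * w ^ n) -
        (1 - x * y * w) * (hsymmEval (x :: A) n * hsymmEval (y :: B) n * w ^ n) =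
      diagonalDefect A B x y w (n + 1) - diagonalDefect A B x y w n := by
  have hS := tailSum_eq_add_mul_tailSum_succ h.summable_hsymmEval_mul_pow n
  have hT := tailSum_eq_add_mul_tailSum_succ h.symm.summable_hsymmEval_mul_pow n
  rw [Finset.sum_range_succ, Finset.sum_range_one, diagonalDefect, diagonalDefect,
    hsymmEval_cons_succ x, hsymmEval_cons_succ y, add_zero, hS, hT]
  ring

lemma DiagonallyConvergent.exists_growth_rates (h : DiagonallyConvergent (x :: A) (y :: B) w) :
    ∃ r s : ℝ, 0 < r ∧ 0 < s ∧ r * s * ‖w‖ < 1 ∧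
      (hsymmEval (x :: A) =O[atTop] (r ^ ·) ∧ hsymmEval A =O[atTop] (r ^ ·) ∧
        tailSum (hsymmEval A) (y * w) =O[atTop] (r ^ ·)) ∧
      (hsymmEval (y :: B) =O[atTop] (s ^ ·) ∧ hsymmEval B =O[atTop] (s ^ ·) ∧
        tailSum (hsymmEval B) (x * w) =O[atTop] (s ^ ·)) := by
  obtain ⟨r, s, hr, hs, hA, hB, hrs⟩ :=
    h.exists_norm_lt (List.cons_ne_nil x A) (List.cons_ne_nil y B)
  have hyw : r * ‖y * w‖ < 1 := by
    refine lt_of_le_of_lt ?_ hrs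
    rw [norm_mul, ← mul_assoc]
    gcongr
    exact (hB y List.mem_cons_self).le
  have hxw : s * ‖x * w‖ < 1 := by
    refine lt_of_le_of_lt ?_ hrs
    rw [norm_mul, ← mul_assoc, mul_comm r s]
    gcongr
    exact (hA x List.mem_cons_self).le
  have hA' := hsymmEval_isBigO_pow hr fun a ha => hA a (List.mem_cons_of_mem x ha)
  have hB' := hsymmEval_isBigO_pow hs fun b hb => hB b (List.mem_cons_of_mem y hb)
  exact ⟨r, s, hr, hs, hrs,
    ⟨hsymmEval_isBigO_pow hr hA, hA', tailSum_isBigO_pow hr hA' hyw⟩,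
    ⟨hsymmEval_isBigO_pow hs hB, hB', tailSum_isBigO_pow hs hB' hxw⟩⟩

lemma summable_norm_hsymmEval_mul_hsymmEval
    (h : DiagonallyConvergent (x :: A) (y :: B) w) :
    Summable fun n => ‖hsymmEval (x :: A) n * hsymmEval (y :: B) n * w ^ n‖ := by
  obtain ⟨r, s, hr, hs, hrs, ⟨hX, -, -⟩, hY, -, -⟩ := h.exists_growth_rates
  exact summable_norm_mul_mul_pow hX hY hr hs hrs

lemma summable_norm_tailSum_mul_tailSum (h : DiagonallyConvergent (x :: A) (y :: B) w)
    (q : ℕ) :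
    Summable fun d => ‖tailSum (hsymmEval A) (y * w) (d + q) *
      tailSum (hsymmEval B) (x * w) (d + q) * w ^ d‖ := by
  obtain ⟨r, s, hr, hs, hrs, ⟨-, -, hS⟩, -, -, hT⟩ := h.exists_growth_rates
  have hsum := summable_norm_mul_mul_pow hS hT hr hs hrs
  simp only [norm_mul _ (w ^ _), norm_pow] at hsum ⊢
  exact summable_shift_mul_pow hsum q

lemma tendsto_diagonalDefect (h : DiagonallyConvergent (x :: A) (y :: B) w) :
    Tendsto (diagonalDefect A B x y w) atTop (nhds 0) := by
  obtain ⟨r, s, hr, hs, hrs, ⟨hX, hA, hS⟩, hY, hB, hT⟩ := h.exists_growth_rates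
  have hmain := summable_norm_mul_mul_pow ((hX.sub hA).add hS) ((hY.sub hB).add hT) hr hs hrs
  have htail := summable_norm_mul_mul_pow hS hT hr hs hrs
  rw [← sub_zero (0 : 𝕜)]
  exact hmain.of_norm.tendsto_atTop_zero.sub htail.of_norm.tendsto_atTop_zero

theorem one_sub_mul_tsum_hsymmEval_mul_hsymmEval
    (h : DiagonallyConvergent (x :: A) (y :: B) w) :
    (1 - x * y * w) * ∑' n, hsymmEval (x :: A) n * hsymmEval (y :: B) n * w ^ n =
      ∑' d, ∑ q ∈ Finset.range 2, (-(x * y * w ^ 2)) ^ q *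
        (tailSum (hsymmEval A) (y * w) (d + q) * tailSum (hsymmEval B) (x * w) (d + q) *
          w ^ d) := by
  rw [← tsum_mul_left]
  refine (tsum_eq_tsum_of_sub_eq_succ_sub ?_ ?_ (diagonalDefect_succ_sub h)
    (diagonalDefect_zero A B x y w) (tendsto_diagonalDefect h)).symm
  · exact summable_sum fun q _ => (summable_norm_tailSum_mul_tailSum h q).of_norm.mul_left _
  · exact (summable_norm_hsymmEval_mul_hsymmEval h).of_norm.mul_left _

end DiagonalIdentity

section PrimePowers

/-- The parameters `p ^ (-α)` of the Euler factor at `p` attached to the shifts `α ∈ A`. -/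
noncomputable def localParams (p : ℕ) (A : List ℂ) : List ℂ :=
  A.map fun α => (p : ℂ) ^ (-α)

lemma localParams_cons (p : ℕ) (α : ℂ) (A : List ℂ) :
    localParams p (α :: A) = (p : ℂ) ^ (-α) :: localParams p A :=
  rfl

lemma natCast_cpow_neg_natCast (p n : ℕ) : (p : ℂ) ^ (-(n : ℂ)) = (p : ℂ)⁻¹ ^ n := by
  rw [cpow_neg, cpow_natCast, inv_pow]

lemma cpow_neg_neg_mul_inv {z : ℂ} (hz : z ≠ 0) (α : ℂ) : z ^ (-(-α)) * z⁻¹ = z ^ (-(1 - α)) := by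
  rw [← cpow_neg_one, ← cpow_add _ _ hz, neg_neg, neg_sub, sub_eq_add_neg]

variable {p : ℕ}

lemma prod_map_one_sub_cpow (hp : p ≠ 0) (A : List ℂ) (s : ℂ) :
    (A.map fun α => 1 - (p : ℂ) ^ (-s - α)).prod =
      ((localParams p A).map fun x => 1 - x * (p : ℂ) ^ (-s)).prod := by
  simp only [localParams, List.map_map, Function.comp_def,
    ← cpow_add _ _ (Nat.cast_ne_zero.2 hp), neg_add_eq_sub]

lemma norm_localParams_mul_cpow_lt_one (hp : 1 < p) {A : List ℂ} {s : ℂ}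
    (hA : ∀ α ∈ A, 0 < (s + α).re) : ∀ x ∈ localParams p A, ‖x * (p : ℂ) ^ (-s)‖ < 1 := by
  intro x hx
  obtain ⟨α, hα, rfl⟩ := List.mem_map.1 hx
  have hp0 : 0 < p := zero_lt_one.trans hp
  rw [← cpow_add _ _ (Nat.cast_ne_zero.2 hp0.ne'), norm_natCast_cpow_of_pos hp0]
  refine Real.rpow_lt_one_of_one_lt_of_neg (Nat.one_lt_cast.2 hp) ?_
  have := hA α hα
  simp only [add_re, neg_re] at this ⊢
  linarith

lemma diagonallyConvergent_localParams (hp : 1 < p) {A B : List ℂ}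
    (h : ∀ a ∈ A, ∀ b ∈ B, -1 < (a + b).re) :
    DiagonallyConvergent (localParams p A) (localParams p B) (p : ℂ)⁻¹ := by
  intro x hx y hy
  obtain ⟨b, hb, rfl⟩ := List.mem_map.1 hy
  have hp0 : (p : ℂ) ≠ 0 := Nat.cast_ne_zero.2 (zero_lt_one.trans hp).ne'
  rw [mul_assoc, ← cpow_neg_one, ← cpow_add _ _ hp0, ← neg_add]
  refine norm_localParams_mul_cpow_lt_one hp (fun a ha => ?_) x hx
  have := h a ha b hb
  simp only [add_re, one_re] at this ⊢
  linarith

lemma tauSh_prime_pow (hp : p.Prime) (A : List ℂ) (n : ℕ) :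
    tauSh A (p ^ n) = hsymmEval (localParams p A) n := by
  induction A generalizing n with
  | nil => simp [tauSh, localParams, hsymmEval_nil, hp.ne_one]
  | cons α A ih =>
    rw [tauSh, Nat.sum_divisors_prime_pow hp, localParams_cons, hsymmEval_cons,
      Finset.Nat.sum_antidiagonal_eq_sum_range_succ_mk]
    refine Finset.sum_congr rfl fun k hk => ?_
    rw [Nat.pow_div (Finset.mem_range_succ_iff.1 hk) hp.pos, ih, Nat.cast_pow,
      ← natCast_cpow_natCast_mul, cpow_nat_mul]

lemma tauSh_prime_pow_of_perm (hp : p.Prime) {A B : List ℂ} (h : A.Perm B) (n : ℕ) :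
    tauSh A (p ^ n) = tauSh B (p ^ n) := by
  rw [tauSh_prime_pow hp, tauSh_prime_pow hp, localParams, hsymmEval_perm (h.map _), localParams]

lemma gSh_of_perm {A B : List ℂ} (h : A.Perm B) : gSh A = gSh B := by
  funext s q
  refine Finset.prod_congr rfl fun p hp => ?_
  simp only [tauSh_prime_pow_of_perm (Nat.prime_of_mem_primeFactors hp) h, (h.map _).prod_eq]

lemma GSh_of_perm {A B : List ℂ} (h : A.Perm B) : GSh A = GSh B := by
  funext s q
  simp only [GSh, gSh_of_perm h]

lemma gSh_prime_pow (hp : p.Prime) {A : List ℂ} {s : ℂ}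
    (hA : ∀ α ∈ A, 0 < (s + α).re) (m : ℕ) :
    gSh A s (p ^ m) = ((localParams p A).map fun x => 1 - x * (p : ℂ) ^ (-s)).prod *
      tailSum (hsymmEval (localParams p A)) ((p : ℂ) ^ (-s)) m := by
  rcases eq_or_ne m 0 with rfl | hm
  · rw [tailSum]
    simp only [add_zero]
    rw [prod_one_sub_mul_tsum_hsymmEval (norm_localParams_mul_cpow_lt_one hp.one_lt hA), pow_zero,
      gSh, Nat.primeFactors_one, Finset.prod_empty]
  · rw [gSh, Nat.primeFactors_prime_pow hm hp, Finset.prod_singleton,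
      prod_map_one_sub_cpow hp.ne_zero, tailSum]
    simp only [hp.factorization_pow, Finsupp.single_eq_same, tauSh_prime_pow hp,
      ← cpow_nat_mul, neg_mul_comm]

lemma GSh_prime_pow_succ (hp : p.Prime) (A : List ℂ) (s : ℂ) (m : ℕ) :
    GSh A s (p ^ (m + 1)) = gSh A s (p ^ (m + 1)) -
      (p : ℂ) ^ s / (p - 1) * (gSh A s (p ^ m) - (p : ℂ) ^ (-s) * gSh A s (p ^ (m + 1))) := by
  have hmoebius : ∀ k, ArithmeticFunction.moebius (p ^ (k + 1 + 1)) = 0 := fun k => by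
    rw [ArithmeticFunction.moebius_apply_prime_pow hp (Nat.succ_ne_zero _), if_neg (by simp)]
  have hdiv_one : p ^ (m + 1) / p = p ^ m := by
    rw [pow_succ, Nat.mul_div_cancel _ hp.pos]
  have hdiv_self : p ^ (m + 1) * p / p = p ^ (m + 1) := Nat.mul_div_cancel _ hp.pos
  rw [GSh, Nat.sum_divisors_prime_pow hp, Finset.sum_range_succ', Finset.sum_range_succ',
    Finset.sum_eq_zero fun k _ => by simp [hmoebius]]
  simp only [zero_add, pow_one, pow_zero, hp.divisors, Nat.divisors_one, Finset.sum_singleton,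
    Finset.sum_pair hp.one_lt.ne, hdiv_one, hdiv_self, ArithmeticFunction.moebius_apply_prime hp,
    ArithmeticFunction.moebius_apply_one, Nat.totient_prime hp, Nat.totient_one,
    Nat.cast_sub hp.one_le, Nat.cast_one, Int.cast_neg, Int.cast_one, one_cpow,
    mul_one, Nat.div_one, cpow_neg]
  ring

lemma GSh_cons_one_sub_prime_pow (hp : p.Prime) {A : List ℂ} {α : ℂ}
    (hA : ∀ a ∈ A, 0 < (1 - α + a).re) (m : ℕ) :
    GSh (α :: A) (1 - α) (p ^ m) =
      ((localParams p A).map fun x => 1 - x * (p : ℂ) ^ (-(1 - α))).prod *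
        tailSum (hsymmEval (localParams p A)) ((p : ℂ) ^ (-(1 - α))) m := by
  have hαA : ∀ a ∈ α :: A, 0 < (1 - α + a).re := List.forall_mem_cons.2 ⟨by simp, hA⟩
  rcases m with _ | m
  · rw [← gSh_prime_pow hp hA]
    simp [GSh, gSh]
  · have hp0 : (p : ℂ) ≠ 0 := Nat.cast_ne_zero.2 hp.ne_zero
    have hp1 : (p : ℂ) - 1 ≠ 0 := sub_ne_zero.2 (Nat.cast_ne_one.2 hp.ne_one)
    have hsum := (summable_norm_hsymmEval_mul_pow
      (norm_localParams_mul_cpow_lt_one hp.one_lt hαA)).of_norm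
    have hα0 : (p : ℂ) ^ (-α) ≠ 0 := by simp [cpow_eq_zero_iff, hp0]
    have hpow : (p : ℂ) ^ (1 - α) = p * (p : ℂ) ^ (-α) := by
      rw [sub_eq_add_neg, cpow_add _ _ hp0, cpow_one]
    rw [GSh_prime_pow_succ hp, gSh_prime_pow hp hαA, gSh_prime_pow hp hαA]
    simp only [localParams_cons, List.map_cons, List.prod_cons] at hsum ⊢
    rw [tailSum_hsymmEval_succ hsum, cpow_neg _ (1 - α), hpow]
    field_simp
    ring

end PrimePowers

section LocalIdentity

variable {p : ℕ} {A B : List ℂ} {α β : ℂ}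

-- The exponents `-(-β)` and `-(-α)` are the ones that `localParams` gives to the shifts `-β`, `-α`.
lemma GSh_mul_GSh_prime_pow (hp : p.Prime) (hA : ∀ a ∈ A, 0 < (1 - α + a).re)
    (hB : ∀ b ∈ B, 0 < (1 - β + b).re) (d q : ℕ) :
    (-1 : ℂ) ^ q * GSh (α :: A) (1 - α) (p ^ (d + q)) * GSh (β :: B) (1 - β) (p ^ (d + q)) *
        (p : ℂ) ^ (-(d : ℂ) - (q : ℂ) * (2 - α - β)) =
      (A.map fun a => 1 - (p : ℂ) ^ (-1 + α - a)).prod *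
        (B.map fun b => 1 - (p : ℂ) ^ (-1 + β - b)).prod *
        ((-((p : ℂ) ^ (-(-β)) * (p : ℂ) ^ (-(-α)) * (p : ℂ)⁻¹ ^ 2)) ^ q *
          (tailSum (hsymmEval (localParams p A)) ((p : ℂ) ^ (-(-α)) * (p : ℂ)⁻¹) (d + q) *
            tailSum (hsymmEval (localParams p B)) ((p : ℂ) ^ (-(-β)) * (p : ℂ)⁻¹) (d + q) *
            (p : ℂ)⁻¹ ^ d)) := by
  have hp0 : (p : ℂ) ≠ 0 := Nat.cast_ne_zero.2 hp.ne_zero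
  have hshift : (p : ℂ) ^ (-(d : ℂ) - (q : ℂ) * (2 - α - β)) =
      (p : ℂ)⁻¹ ^ d * ((p : ℂ) ^ (-(-β)) * (p : ℂ) ^ (-(-α)) * (p : ℂ)⁻¹ ^ 2) ^ q := by
    rw [sq, mul_mul_mul_comm, cpow_neg_neg_mul_inv hp0, cpow_neg_neg_mul_inv hp0,
      ← cpow_add _ _ hp0, ← cpow_nat_mul, ← natCast_cpow_neg_natCast,
      ← cpow_add _ _ hp0]
    ring_nf
  rw [GSh_cons_one_sub_prime_pow hp hA, GSh_cons_one_sub_prime_pow hp hB, hshift,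
    ← prod_map_one_sub_cpow hp.ne_zero, ← prod_map_one_sub_cpow hp.ne_zero,
    ← cpow_neg_neg_mul_inv hp0, ← cpow_neg_neg_mul_inv hp0, neg_pow _ q]
  simp only [neg_sub, sub_eq_neg_add _ (1 : ℂ)]
  ring

lemma summable_norm_tauSh_mul_tauSh (hp : p.Prime)
    (h : ∀ a ∈ -β :: A, ∀ b ∈ -α :: B, -1 < (a + b).re) :
    Summable fun j : ℕ =>
      ‖tauSh (-β :: A) (p ^ j) * tauSh (-α :: B) (p ^ j) * (p : ℂ) ^ (-(j : ℂ))‖ := by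
  simp only [tauSh_prime_pow hp, natCast_cpow_neg_natCast]
  exact summable_norm_hsymmEval_mul_hsymmEval (diagonallyConvergent_localParams hp.one_lt h)

lemma one_sub_add_re_pos_of_forall_cons (h : ∀ a ∈ -β :: A, ∀ b ∈ -α :: B, -1 < (a + b).re) :
    (∀ a ∈ A, 0 < (1 - α + a).re) ∧ ∀ b ∈ B, 0 < (1 - β + b).re := by
  refine ⟨fun a ha => ?_, fun b hb => ?_⟩
  · have := h a (List.mem_cons_of_mem _ ha) (-α) List.mem_cons_self
    simp only [add_re, sub_re, neg_re, one_re] at this ⊢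
    linarith
  · have := h (-β) List.mem_cons_self b (List.mem_cons_of_mem _ hb)
    simp only [add_re, sub_re, neg_re, one_re] at this ⊢
    linarith

lemma summable_norm_GSh_mul_GSh (hp : p.Prime)
    (h : ∀ a ∈ -β :: A, ∀ b ∈ -α :: B, -1 < (a + b).re) :
    Summable fun x : ℕ × Fin 2 =>
      ‖(-1 : ℂ) ^ (x.2 : ℕ) * GSh (α :: A) (1 - α) (p ^ (x.1 + (x.2 : ℕ))) *
        GSh (β :: B) (1 - β) (p ^ (x.1 + (x.2 : ℕ))) *
        (p : ℂ) ^ (-(x.1 : ℂ) - ((x.2 : ℕ) : ℂ) * (2 - α - β))‖ := by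
  obtain ⟨hA, hB⟩ := one_sub_add_re_pos_of_forall_cons h
  have hconv := diagonallyConvergent_localParams hp.one_lt h
  rw [← (Equiv.prodComm (Fin 2) ℕ).summable_iff]
  refine (summable_prod_of_nonneg fun _ => norm_nonneg _).2 ⟨fun q => ?_, .of_finite⟩
  simp only [Equiv.prodComm_apply, Prod.fst_swap, Prod.snd_swap,
    GSh_mul_GSh_prime_pow hp hA hB]
  simp only [← mul_assoc _ (_ ^ (q : ℕ)), norm_mul (_ * _ ^ (q : ℕ))]
  exact (summable_norm_tailSum_mul_tailSum hconv q).mul_left _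

theorem prod_mul_tsum_tauSh_eq_tsum_GSh (hp : p.Prime)
    (h : ∀ a ∈ -β :: A, ∀ b ∈ -α :: B, -1 < (a + b).re) :
    (A.map fun a => 1 - (p : ℂ) ^ (-1 + α - a)).prod *
        (B.map fun b => 1 - (p : ℂ) ^ (-1 + β - b)).prod *
        (1 - (p : ℂ) ^ (-1 + α + β)) *
        ∑' j : ℕ, tauSh (-β :: A) (p ^ j) * tauSh (-α :: B) (p ^ j) * (p : ℂ) ^ (-(j : ℂ)) =
      ∑' d : ℕ, ∑ q ∈ Finset.range 2,
        (-1 : ℂ) ^ q * GSh (α :: A) (1 - α) (p ^ (d + q)) * GSh (β :: B) (1 - β) (p ^ (d + q)) *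
          (p : ℂ) ^ (-(d : ℂ) - (q : ℂ) * (2 - α - β)) := by
  obtain ⟨hA, hB⟩ := one_sub_add_re_pos_of_forall_cons h
  have hp0 : (p : ℂ) ≠ 0 := Nat.cast_ne_zero.2 hp.ne_zero
  have hfactor : (p : ℂ) ^ (-1 + α + β) =
      (p : ℂ) ^ (-(-β)) * (p : ℂ) ^ (-(-α)) * (p : ℂ)⁻¹ := by
    rw [mul_assoc, cpow_neg_neg_mul_inv hp0, ← cpow_add _ _ hp0]
    ring_nf
  simp only [GSh_mul_GSh_prime_pow hp hA hB, ← Finset.mul_sum]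
  rw [tsum_mul_left, mul_assoc, hfactor]
  congr 1
  simp only [tauSh_prime_pow hp, natCast_cpow_neg_natCast]
  exact one_sub_mul_tsum_hsymmEval_mul_hsymmEval (diagonallyConvergent_localParams hp.one_lt h)

end LocalIdentity

lemma neg_one_lt_add_re_of_abs_re_lt {L₁ L₂ M₁ M₂ : List ℂ} {αh βh : ℂ}
    (hA : ∀ α ∈ L₁ ++ αh :: L₂, |α.re| < 1 / 4) (hB : ∀ β ∈ M₁ ++ βh :: M₂, |β.re| < 1 / 4) :
    ∀ a ∈ (L₁ ++ L₂) ++ [-βh], ∀ b ∈ (M₁ ++ M₂) ++ [-αh], -1 < (a + b).re := by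
  have bound : ∀ {L₁ L₂ : List ℂ} {γ δ : ℂ}, (∀ a ∈ L₁ ++ γ :: L₂, |a.re| < 1 / 4) →
      |δ.re| < 1 / 4 → ∀ a ∈ (L₁ ++ L₂) ++ [-δ], -(1 / 4) < a.re := by
    intro L₁ L₂ γ δ hL hδ a ha
    rcases List.mem_append.1 ha with hmem | hmem
    · exact neg_lt_of_abs_lt (hL a (List.perm_middle.mem_iff.2 (List.mem_cons_of_mem γ hmem)))
    · rw [List.mem_singleton.1 hmem, neg_re]
      exact neg_lt_neg (lt_of_abs_lt hδ)
  intro a ha b hb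
  have hare := bound hA (hB βh List.mem_append_cons_self) a ha
  have hbre := bound hB (hA αh List.mem_append_cons_self) b hb
  rw [add_re]
  linarith

theorem stmt14_general (L₁ L₂ M₁ M₂ : List ℂ) (αh βh : ℂ)
    (h : ∀ a ∈ (L₁ ++ L₂) ++ [-βh], ∀ b ∈ (M₁ ++ M₂) ++ [-αh], -1 < (a + b).re)
    (p : ℕ) (hp : p.Prime) :
    Summable (fun j : ℕ =>
      ‖tauSh ((L₁ ++ L₂) ++ [-βh]) (p ^ j) * tauSh ((M₁ ++ M₂) ++ [-αh]) (p ^ j)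
          * (p : ℂ) ^ (-(j : ℂ))‖) ∧
    Summable (fun x : ℕ × Fin 2 =>
      ‖(-1 : ℂ) ^ (x.2 : ℕ) * GSh (L₁ ++ αh :: L₂) (1 - αh) (p ^ (x.1 + (x.2 : ℕ)))
          * GSh (M₁ ++ βh :: M₂) (1 - βh) (p ^ (x.1 + (x.2 : ℕ)))
          * (p : ℂ) ^ (-(x.1 : ℂ) - ((x.2 : ℕ) : ℂ) * (2 - αh - βh))‖) ∧
    ((L₁ ++ L₂).map (fun α => 1 - (p : ℂ) ^ (-1 + αh - α))).prod *
        ((M₁ ++ M₂).map (fun β => 1 - (p : ℂ) ^ (-1 + βh - β))).prod *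
        (1 - (p : ℂ) ^ (-1 + αh + βh)) *
        (∑' j : ℕ, tauSh ((L₁ ++ L₂) ++ [-βh]) (p ^ j) * tauSh ((M₁ ++ M₂) ++ [-αh]) (p ^ j)
          * (p : ℂ) ^ (-(j : ℂ)))
      = ∑' d : ℕ, ∑ q ∈ Finset.range 2,
          (-1 : ℂ) ^ q * GSh (L₁ ++ αh :: L₂) (1 - αh) (p ^ (d + q))
            * GSh (M₁ ++ βh :: M₂) (1 - βh) (p ^ (d + q))
            * (p : ℂ) ^ (-(d : ℂ) - (q : ℂ) * (2 - αh - βh)) := by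
  have hX := tauSh_prime_pow_of_perm hp (List.perm_append_singleton (-βh) (L₁ ++ L₂))
  have hY := tauSh_prime_pow_of_perm hp (List.perm_append_singleton (-αh) (M₁ ++ M₂))
  have hcons : ∀ a ∈ -βh :: (L₁ ++ L₂), ∀ b ∈ -αh :: (M₁ ++ M₂), -1 < (a + b).re :=
    fun a ha b hb => h a ((List.perm_append_singleton _ _).mem_iff.2 ha) b
      ((List.perm_append_singleton _ _).mem_iff.2 hb)
  have hGA : GSh (L₁ ++ αh :: L₂) = GSh (αh :: (L₁ ++ L₂)) := GSh_of_perm List.perm_middle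
  have hGB : GSh (M₁ ++ βh :: M₂) = GSh (βh :: (M₁ ++ M₂)) := GSh_of_perm List.perm_middle
  simp only [hX, hY, hGA, hGB]
  exact ⟨summable_norm_tauSh_mul_tauSh hp hcons, summable_norm_GSh_mul_GSh hp hcons,
    prod_mul_tsum_tauSh_eq_tsum_GSh hp hcons⟩

/-- Let A, B be tuples all of whose entries have |ℜ| < 1/4, with
distinguished entries α̂ ∈ A, β̂ ∈ B, A′ = A minus α̂, B′ = B minus β̂. Then for every
prime p,
∏_{α∈A′}(1−p^{−1+α̂−α}) ∏_{β∈B′}(1−p^{−1+β̂−β}) (1−p^{−1+α̂+β̂})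
  Σ_{j≥0} τ_{A′∪{−β̂}}(p^j) τ_{B′∪{−α̂}}(p^j) p^{−j}
  = Σ_{d≥0} Σ_{q=0}^{1} (−1)^q G_A(1−α̂,p^{d+q}) G_B(1−β̂,p^{d+q}) p^{−d−q(2−α̂−β̂)},
all series converging absolutely. -/
theorem stmt14 (L₁ L₂ M₁ M₂ : List ℂ) (αh βh : ℂ)
    (hA : ∀ α ∈ L₁ ++ αh :: L₂, |α.re| < 1/4)
    (hB : ∀ β ∈ M₁ ++ βh :: M₂, |β.re| < 1/4)
    (p : ℕ) (hp : p.Prime) :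
    Summable (fun j : ℕ =>
      ‖tauSh ((L₁ ++ L₂) ++ [-βh]) (p ^ j) * tauSh ((M₁ ++ M₂) ++ [-αh]) (p ^ j)
          * (p : ℂ) ^ (-(j : ℂ))‖) ∧
    Summable (fun x : ℕ × Fin 2 =>
      ‖(-1 : ℂ) ^ (x.2 : ℕ) * GSh (L₁ ++ αh :: L₂) (1 - αh) (p ^ (x.1 + (x.2 : ℕ)))
          * GSh (M₁ ++ βh :: M₂) (1 - βh) (p ^ (x.1 + (x.2 : ℕ)))
          * (p : ℂ) ^ (-(x.1 : ℂ) - ((x.2 : ℕ) : ℂ) * (2 - αh - βh))‖) ∧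
    ((L₁ ++ L₂).map (fun α => 1 - (p : ℂ) ^ (-1 + αh - α))).prod *
        ((M₁ ++ M₂).map (fun β => 1 - (p : ℂ) ^ (-1 + βh - β))).prod *
        (1 - (p : ℂ) ^ (-1 + αh + βh)) *
        (∑' j : ℕ, tauSh ((L₁ ++ L₂) ++ [-βh]) (p ^ j) * tauSh ((M₁ ++ M₂) ++ [-αh]) (p ^ j)
          * (p : ℂ) ^ (-(j : ℂ)))
      = ∑' d : ℕ, ∑ q ∈ Finset.range 2,
          (-1 : ℂ) ^ q * GSh (L₁ ++ αh :: L₂) (1 - αh) (p ^ (d + q))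
            * GSh (M₁ ++ βh :: M₂) (1 - βh) (p ^ (d + q))
            * (p : ℂ) ^ (-(d : ℂ) - (q : ℂ) * (2 - αh - βh)) := by
  exact stmt14_general L₁ L₂ M₁ M₂ αh βh (neg_one_lt_add_re_of_abs_re_lt hA hB) p hp
end
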